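/- There is an absolute constant Γ > 0 with the following property. Let p, r, N, k ∈ ℕ with 1 ≤ r, 1 ≤ N, r < p − N, and 0 ≤ k ≤ min{N, r}. Set γ := (p/r)·H(N/p) − H(k/r) − (p/r − 1)·H((N−k)/(p−r)). Then binom(r,k)·binom(p−r,N−k) ≤ Γ·binom(p,N)·√(N·(p−N)/(p−N−r))·2^(−r·γ). -/

import Mathlib

/-- The binary entropy function `H(t) = −t·log₂ t − (1−t)·log₂(1−t)`
(with the conventions of `Real.logb`, so `H 0 = H 1 = 0`). -/
noncomputable def binEntropy (t : ℝ) : ℝ :=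
  -(t * Real.logb 2 t) - (1 - t) * Real.logb 2 (1 - t)

/-!
The exponential `2 ^ (n * H (k / n))` equals `n ^ n / (k ^ k * l ^ l)` for `n = k + l`. By the
binomial theorem for `(k + l) ^ n` it is an upper bound for `n.choose k`; by Stirling it is also a
lower bound up to a factor of order `√(n / (k * l))`. The upper bound applied to the two binomials
on the left and the lower bound applied to `p.choose N` give the inequality with
`√(N * (p - N) / p)` as prefactor, which is at most the required one since `p - N - r ≤ p`.
-/

open Real (exp log negMulLog)
open scoped Nat Real

theorem binEntropy_eq_negMulLog_div_log_two (t : ℝ) :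
    binEntropy t = (negMulLog t + negMulLog (1 - t)) / log 2 := by
  simp only [binEntropy, Real.logb, negMulLog]
  ring

theorem mul_negMulLog_div {n : ℝ} (hn : n ≠ 0) (x : ℝ) :
    n * negMulLog (x / n) = negMulLog x + x * log n := by
  rw [div_eq_mul_inv, Real.negMulLog_mul, negMulLog, negMulLog, Real.log_inv]
  field_simp

theorem add_mul_binEntropy_div_add {a b : ℝ} (hab : a + b ≠ 0) :
    (a + b) * binEntropy (a / (a + b)) =
      (negMulLog a + negMulLog b - negMulLog (a + b)) / log 2 := by
  have one_sub_div : 1 - a / (a + b) = b / (a + b) := by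
    field_simp
    ring
  rw [binEntropy_eq_negMulLog_div_log_two, one_sub_div, mul_div_assoc', mul_add,
    mul_negMulLog_div hab, mul_negMulLog_div hab]
  simp only [negMulLog]
  ring

theorem rpow_self_eq_exp_neg_negMulLog {x : ℝ} (hx : 0 ≤ x) : x ^ x = exp (-negMulLog x) := by
  obtain rfl | hx := hx.eq_or_lt
  · simp
  · rw [Real.rpow_def_of_pos hx, negMulLog]
    ring_nf

theorem two_rpow_add_mul_binEntropy_div_add {a b : ℝ} (ha : 0 ≤ a) (hb : 0 ≤ b) :
    (2 : ℝ) ^ ((a + b) * binEntropy (a / (a + b))) = (a + b) ^ (a + b) / (a ^ a * b ^ b) := by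
  obtain hab | hab := (add_nonneg ha hb).eq_or_lt
  · obtain ⟨rfl, rfl⟩ := (add_eq_zero_iff_of_nonneg ha hb).1 hab.symm
    simp
  · have log_two_ne_zero : log 2 ≠ 0 := (Real.log_pos one_lt_two).ne'
    rw [add_mul_binEntropy_div_add hab.ne', Real.rpow_def_of_pos two_pos,
      mul_div_cancel₀ _ log_two_ne_zero, rpow_self_eq_exp_neg_negMulLog ha,
      rpow_self_eq_exp_neg_negMulLog hb, rpow_self_eq_exp_neg_negMulLog hab.le,
      ← Real.exp_add, ← Real.exp_sub]
    ring_nf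

theorem two_rpow_mul_binEntropy_natCast_div (k l : ℕ) :
    (2 : ℝ) ^ (((k + l : ℕ) : ℝ) * binEntropy (k / (k + l : ℕ))) =
      ((k + l : ℕ) : ℝ) ^ (k + l) / ((k : ℝ) ^ k * (l : ℝ) ^ l) := by
  simpa only [← Nat.cast_add, Real.rpow_natCast] using
    two_rpow_add_mul_binEntropy_div_add k.cast_nonneg l.cast_nonneg

theorem choose_mul_pow_mul_pow_le_add_pow {R : Type*} [CommSemiring R] [PartialOrder R]
    [IsOrderedRing R] {a b : R} (ha : 0 ≤ a) (hb : 0 ≤ b) (k l : ℕ) :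
    ((k + l).choose k : R) * (a ^ k * b ^ l) ≤ (a + b) ^ (k + l) := by
  have term_le_sum := Finset.single_le_sum (s := Finset.range (k + l + 1))
    (f := fun m ↦ a ^ m * b ^ (k + l - m) * ((k + l).choose m : R))
    (fun m _ ↦ by positivity) (Finset.mem_range.2 (by lia : k < k + l + 1))
  simpa only [add_pow, Nat.add_sub_cancel_left, mul_comm] using term_le_sum

theorem choose_le_two_rpow_mul_binEntropy (n k : ℕ) :
    (n.choose k : ℝ) ≤ 2 ^ (n * binEntropy (k / n)) := by
  obtain hnk | hkn := lt_or_ge n k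
  · rw [Nat.choose_eq_zero_of_lt hnk, Nat.cast_zero]
    positivity
  · obtain ⟨l, rfl⟩ := Nat.exists_eq_add_of_le hkn
    have pow_self_pos (m : ℕ) : (0 : ℝ) < (m : ℝ) ^ m := mod_cast Nat.pow_self_pos
    rw [two_rpow_mul_binEntropy_natCast_div,
      le_div_iff₀ (mul_pos (pow_self_pos k) (pow_self_pos l)), Nat.cast_add]
    exact choose_mul_pow_mul_pow_le_add_pow k.cast_nonneg l.cast_nonneg k l

theorem factorial_le_exp_one_mul_sqrt_mul_pow {n : ℕ} (hn : n ≠ 0) :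
    (n ! : ℝ) ≤ exp 1 * √n * (n / exp 1) ^ n := by
  obtain ⟨m, rfl⟩ := Nat.exists_eq_succ_of_ne_zero hn
  have stirlingSeq_le : Stirling.stirlingSeq (m + 1) ≤ exp 1 / √2 :=
    Stirling.stirlingSeq_one ▸ Stirling.stirlingSeq'_antitone m.zero_le
  rw [Stirling.stirlingSeq, div_le_iff₀ (by positivity), Real.sqrt_mul zero_le_two]
    at stirlingSeq_le
  refine stirlingSeq_le.trans_eq ?_
  field_simp

theorem sqrt_mul_pow_le_choose_mul_stirling {k l : ℕ} (hk : k ≠ 0) (hl : l ≠ 0) :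
    √(2 * π * (k + l : ℕ)) * ((k + l : ℕ) / exp 1) ^ (k + l) ≤
      (k + l).choose k *
        ((exp 1 * √k * (k / exp 1) ^ k) * (exp 1 * √l * (l / exp 1) ^ l)) := by
  calc √(2 * π * (k + l : ℕ)) * ((k + l : ℕ) / exp 1) ^ (k + l)
      ≤ (k + l)! := Stirling.le_factorial_stirling (k + l)
    _ = (k + l).choose k * (k ! * l !) := by
      rw [Nat.cast_add_choose, div_mul_cancel₀ _ (by positivity)]
    _ ≤ _ := by
      gcongr
      · exact factorial_le_exp_one_mul_sqrt_mul_pow hk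
      · exact factorial_le_exp_one_mul_sqrt_mul_pow hl

theorem two_rpow_mul_binEntropy_le_choose_mul_sqrt {n k : ℕ} (hk : k ≠ 0) (hkn : k < n) :
    (2 : ℝ) ^ (n * binEntropy (k / n)) ≤
      exp 1 ^ 2 / √(2 * π) * n.choose k * √(k * (n - k) / n) := by
  obtain ⟨l, rfl⟩ := Nat.exists_eq_add_of_le hkn.le
  have hl : l ≠ 0 := by lia
  have stirling := sqrt_mul_pow_le_choose_mul_stirling hk hl
  have cast_sub : ((k + l : ℕ) : ℝ) - k = l := by
    push_cast
    ring
  rw [two_rpow_mul_binEntropy_natCast_div, cast_sub, Real.sqrt_div (by positivity),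
    Real.sqrt_mul k.cast_nonneg, div_le_iff₀ (by positivity)]
  rw [Real.sqrt_mul (by positivity), div_pow, div_pow, div_pow, pow_add (exp 1)] at stirling
  field_simp at stirling ⊢
  linarith

theorem stmt_16_general {p r N k : ℕ} (hr : 1 ≤ r) (hrp : r ≤ p) (hN : 1 ≤ N) (hNp : N < p)
    (hkN : k ≤ N) :
    (r.choose k : ℝ) * ((p - r).choose (N - k) : ℝ) ≤
      exp 1 ^ 2 / √(2 * π) * (p.choose N : ℝ) * √((N : ℝ) * ((p : ℝ) - N) / p) *
        (2 : ℝ) ^ (-(r : ℝ) *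
          (((p : ℝ) / r) * binEntropy ((N : ℝ) / p) - binEntropy ((k : ℝ) / r) -
            ((p : ℝ) / r - 1) * binEntropy (((N : ℝ) - k) / ((p : ℝ) - r)))) := by
  set γ : ℝ := ((p : ℝ) / r) * binEntropy ((N : ℝ) / p) - binEntropy ((k : ℝ) / r) -
    ((p : ℝ) / r - 1) * binEntropy (((N : ℝ) - k) / ((p : ℝ) - r)) with hγ
  have exponent_eq : (r : ℝ) * binEntropy (k / r) +
      (p - r : ℕ) * binEntropy ((N - k : ℕ) / (p - r : ℕ)) =
        p * binEntropy (N / p) + -r * γ := by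
    rw [hγ, Nat.cast_sub hrp, Nat.cast_sub hkN]
    field_simp
    ring
  calc (r.choose k : ℝ) * ((p - r).choose (N - k) : ℝ)
      ≤ 2 ^ ((r : ℝ) * binEntropy (k / r)) *
          2 ^ ((p - r : ℕ) * binEntropy ((N - k : ℕ) / (p - r : ℕ))) := by
        gcongr <;> exact choose_le_two_rpow_mul_binEntropy _ _
    _ = 2 ^ (p * binEntropy (N / p)) * 2 ^ (-r * γ) := by
        rw [← Real.rpow_add two_pos, exponent_eq, Real.rpow_add two_pos]
    _ ≤ _ := by
        gcongr
        exact two_rpow_mul_binEntropy_le_choose_mul_sqrt (by lia) hNp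

/-- Upper bound on the hypergeometric weight `binom(r,k)·binom(p−r,N−k)` in terms of
`binom(p,N)` and the entropy quantity `γ`. -/
theorem stmt_16 :
    ∃ Γ : ℝ, 0 < Γ ∧
      ∀ p r N k : ℕ, 1 ≤ r → 1 ≤ N → r + N < p → k ≤ min N r →
        (r.choose k : ℝ) * ((p - r).choose (N - k) : ℝ) ≤
          Γ * (p.choose N : ℝ) *
            Real.sqrt ((N : ℝ) * ((p : ℝ) - N) / ((p : ℝ) - N - r)) *
            (2 : ℝ) ^ (-(r : ℝ) *
              (((p : ℝ) / r) * binEntropy ((N : ℝ) / p) - binEntropy ((k : ℝ) / r) -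
                ((p : ℝ) / r - 1) * binEntropy (((N : ℝ) - k) / ((p : ℝ) - r)))) := by
  refine ⟨exp 1 ^ 2 / √(2 * π), by positivity, fun p r N k hr hN hp hk ↦ ?_⟩
  have hp' : (r : ℝ) + N < p := mod_cast hp
  refine (stmt_16_general hr (by lia) hN (by lia) (hk.trans (min_le_left N r))).trans ?_
  have numerator_nonneg : 0 ≤ (N : ℝ) * (p - N) :=
    mul_nonneg N.cast_nonneg (by linarith [r.cast_nonneg (α := ℝ)])
  gcongr <;> linarith [r.cast_nonneg (α := ℝ), N.cast_nonneg (α := ℝ)]
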